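/- arXiv:2006.12105 — 2 statements merged into one kernel-verified Lean document; each statement's English description precedes it below -/
import Mathlib

section
/- Let f be an inner function with f(0)=0 which is not a rotation, and ε_1,ε_2,ε_3 ∈ {1,−1}. There is a constant C=C(f)>0 such that for all positive integers n_1<n_2<n_3, |∫_{∂𝔻} f^{ε_1 n_1}·(f^{ε_2 n_2})²·f^{ε_3 n_3} dm| ≤ C·|f'(0)|^{n_3−n_1}. -/
open MeasureTheory Set Metric Filter Complex

/-- Normalized Lebesgue (arc-length) measure on the unit circle, as a measure on ℂ. -/
noncomputable def m : Measure ℂ :=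
  (ENNReal.ofReal (2 * Real.pi))⁻¹ •
    (Measure.map (fun θ : ℝ => Complex.exp ((θ : ℂ) * Complex.I))
      (volume.restrict (Set.Ioc (0:ℝ) (2 * Real.pi))))

/-- `spow F ε n` is `F^[n]` if `ε = 1` and its complex conjugate if `ε = -1`. -/
noncomputable def spow (F : ℂ → ℂ) (ε : ℤ) (n : ℕ) (z : ℂ) : ℂ :=
  if ε = 1 then F^[n] z else (starRingEnd ℂ) (F^[n] z)

/-!
Almost every point of the circle is sent by the radial limits of `f` to a point of the circle; let
`G` be this boundary map and `a = f'(0)`. Since `f(z)^k = z^k (f(z)/z)^k` with `f(z)/z` holomorphic,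
bounded by `1` and equal to `a` at `0`, the boundary function of `f^k` has no Fourier modes below
`k`, and its `k`-th coefficient is `a^k`. So `G` preserves `m`, and composition with `G` acts on the
positive Fourier modes as a lower triangular matrix with diagonal entries `a^n`.

By invariance of `m`, and after a conjugation making `ε₁ = -1`, the integral is the first Fourier
coefficient of `ψ ∘ G^p` with `p = n₂ - n₁`, `q = n₃ - n₂` and
`ψ(z) = z^(2 ε₂) (f^{ε₃ q})(z)`. Triangularity makes this exactly `a^p` times the first
coefficient of `ψ`, i.e. the coefficient of `f^{ε₃ q}` of index `1 - 2 ε₂`, which is `-1` or `3`.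
As that index is nonzero, solving the triangular recursion, whose first diagonal entry `a` dominates
the others, bounds the coefficient by a constant times `|a|^q`.
-/
open AddCircle Topology ComplexConjugate

section Sequences

lemma le_mul_pow_of_le_mul_add {x : ℕ → ℝ} {A D θ ρ : ℝ} (hA : 0 ≤ A) (hD : 0 ≤ D) (hθ : 0 ≤ θ)
    (hθρ : θ < ρ) (h0 : x 0 ≤ A) (hsucc : ∀ b, x (b + 1) ≤ θ * x b + D * ρ ^ b) (b : ℕ) :
    x b ≤ (A + D / (ρ - θ)) * ρ ^ b := by
  have hgap : 0 < ρ - θ := sub_pos.2 hθρ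
  have hρ : 0 ≤ ρ := hθ.trans hθρ.le
  have hfix : θ * (A + D / (ρ - θ)) + D ≤ (A + D / (ρ - θ)) * ρ := by
    have : D / (ρ - θ) * (ρ - θ) = D := div_mul_cancel₀ D hgap.ne'
    nlinarith [mul_nonneg hA hgap.le]
  induction b with
  | zero => simpa using h0.trans (le_add_of_nonneg_right (by positivity))
  | succ b ih =>
    calc x (b + 1) ≤ θ * ((A + D / (ρ - θ)) * ρ ^ b) + D * ρ ^ b := (hsucc b).trans (by gcongr)
      _ = (θ * (A + D / (ρ - θ)) + D) * ρ ^ b := by ring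
      _ ≤ (A + D / (ρ - θ)) * ρ * ρ ^ b := by gcongr
      _ = (A + D / (ρ - θ)) * ρ ^ (b + 1) := by ring

lemma exists_norm_le_mul_pow_of_triangular_recursion {R : Type*} [SeminormedRing R]
    {M : ℕ → ℕ → R} {ρ : ℝ} (hρ0 : 0 < ρ) (hρ1 : ρ < 1) (hM : ∀ n, 0 < n → ‖M n n‖ ≤ ρ ^ n)
    {n : ℕ} (hn : 0 < n) :
    ∃ K : ℝ, 0 ≤ K ∧ ∀ u : ℕ → ℕ → R, (∀ n, ‖u 0 n‖ ≤ 1) →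
      (∀ b n, 0 < n → u (b + 1) n = ∑ k ∈ Finset.Icc 1 n, M n k * u b k) →
        ∀ b, ‖u b n‖ ≤ K * ρ ^ b := by
  induction n using Nat.strong_induction_on with
  | _ n ih =>
  choose! K hK0 hK using ih
  have hK0' : ∀ k ∈ Finset.Ico 1 n, 0 ≤ K k := fun k hk =>
    hK0 k (Finset.mem_Ico.1 hk).2 (Finset.mem_Ico.1 hk).1
  set D : ℝ := ∑ k ∈ Finset.Ico 1 n, ‖M n k‖ * K k with hD
  have hD0 : 0 ≤ D := Finset.sum_nonneg fun k hk => mul_nonneg (norm_nonneg _) (hK0' k hk)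
  have hstep : ∀ u : ℕ → ℕ → R, (∀ n, ‖u 0 n‖ ≤ 1) →
      (∀ b n, 0 < n → u (b + 1) n = ∑ k ∈ Finset.Icc 1 n, M n k * u b k) →
      ∀ b, ‖u (b + 1) n‖ ≤ ρ ^ n * ‖u b n‖ + D * ρ ^ b := by
    intro u hu0 hu b
    rw [hu b n hn, ← Finset.sum_Ico_add_eq_sum_Icc hn, add_comm, hD, Finset.sum_mul]
    refine (norm_add_le _ _).trans (add_le_add ?_ (norm_sum_le_of_le _ fun k hk => ?_))
    · exact (norm_mul_le _ _).trans (by gcongr; exact hM n hn)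
    · obtain ⟨hk0, hkn⟩ := Finset.mem_Ico.1 hk
      rw [mul_assoc]
      exact (norm_mul_le _ _).trans (by gcongr; exact hK k hkn hk0 u hu0 hu b)
  obtain rfl | hn2 : n = 1 ∨ 1 < n := by omega
  · refine ⟨1, zero_le_one, fun u hu0 hu b => ?_⟩
    rw [one_mul]
    induction b with
    | zero => simpa using hu0 1
    | succ b ihb =>
      calc ‖u (b + 1) 1‖ ≤ ρ * ‖u b 1‖ := by simpa [hD] using hstep u hu0 hu b
        _ ≤ ρ * ρ ^ b := by gcongr
        _ = ρ ^ (b + 1) := (pow_succ' ρ b).symm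
  · have hgap : ρ ^ n < ρ := pow_lt_self_of_lt_one₀ hρ0 hρ1 hn2
    refine ⟨1 + D / (ρ - ρ ^ n), ?_, fun u hu0 hu =>
      le_mul_pow_of_le_mul_add zero_le_one hD0 (by positivity) hgap (hu0 n) (hstep u hu0 hu)⟩
    have := div_nonneg hD0 (sub_pos.2 hgap).le
    positivity

end Sequences

section Fourier

variable {T : ℝ}

lemma fourier_natCast (n : ℕ) (x : AddCircle T) : fourier (n : ℤ) x = fourier 1 x ^ n := by
  induction n with
  | zero => rw [Nat.cast_zero, fourier_zero, pow_zero]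
  | succ n ih => rw [Nat.cast_succ, fourier_add, ih, pow_succ]

lemma norm_fourier_apply (n : ℤ) (x : AddCircle T) : ‖fourier n x‖ = 1 := by
  rw [fourier_apply, Circle.norm_coe]

variable [hT : Fact (0 < T)]

lemma fourierCoeff_fourier_smul {E : Type*} [NormedAddCommGroup E] [NormedSpace ℂ E] (j n : ℤ)
    (φ : AddCircle T → E) :
    fourierCoeff (fun x => fourier j x • φ x) n = fourierCoeff φ (n - j) := by
  simp only [fourierCoeff, smul_smul, ← fourier_add]
  rw [neg_sub, neg_add_eq_sub]

lemma fourierCoeff_conj (φ : AddCircle T → ℂ) (n : ℤ) :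
    fourierCoeff (fun x => conj (φ x)) n = conj (fourierCoeff φ (-n)) := by
  rw [fourierCoeff, fourierCoeff, ← integral_conj]
  simp only [smul_eq_mul, map_mul, ← fourier_neg, neg_neg]

lemma norm_fourierCoeff_fourier_le_one (k n : ℤ) :
    ‖fourierCoeff (T := T) (fourier k) n‖ ≤ 1 := by
  rw [fourierCoeff_fourier, Pi.single_apply]
  split_ifs <;> simp

lemma memLp_fourier (k : ℤ) (p : ENNReal) : MemLp (fourier (T := T) k) p haarAddCircle :=
  MemLp.of_bound (fourier k).continuous.aestronglyMeasurable 1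
    (Eventually.of_forall fun x => (norm_fourier_apply k x).le)

lemma measure_ext_of_integral_fourier {P Q : Measure (AddCircle T)} [IsFiniteMeasure P]
    [IsFiniteMeasure Q] (h : ∀ k : ℤ, ∫ x, fourier k x ∂P = ∫ x, fourier k x ∂Q) : P = Q := by
  have hint : ∀ (R : Measure (AddCircle T)) [IsFiniteMeasure R] (g : C(AddCircle T, ℂ)),
      Integrable g R := fun R _ g =>
    g.continuous.integrable_of_hasCompactSupport (HasCompactSupport.of_compactSpace g)
  have hspan : ∀ g ∈ Submodule.span ℂ (range (fourier (T := T))),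
      ∫ x, g x ∂P = ∫ x, g x ∂Q := by
    intro g hg
    induction hg using Submodule.span_induction with
    | mem g hg => obtain ⟨k, rfl⟩ := hg; exact h k
    | zero => simp
    | add g₁ g₂ _ _ h₁ h₂ =>
      simp only [ContinuousMap.add_apply]
      rw [integral_add (hint P g₁) (hint P g₂), integral_add (hint Q g₁) (hint Q g₂), h₁, h₂]
    | smul a g _ hg =>
      simp only [ContinuousMap.smul_apply]
      rw [integral_smul, integral_smul, hg]
  refine ext_of_forall_mem_subalgebra_integral_eq_of_pseudoEMetric_complete_countable
    (A := (fourierSubalgebra (T := T)).comap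
      (BoundedContinuousFunction.toContinuousMapStarₐ ℂ)) ?_ fun g hg => ?_
  · intro x y hxy
    obtain ⟨_, ⟨g, hg, rfl⟩, hne⟩ := fourierSubalgebra_separatesPoints (T := T) hxy
    exact ⟨g, ⟨g, ⟨BoundedContinuousFunction.mkOfCompact g, hg, rfl⟩, rfl⟩, hne⟩
  · refine hspan (g : C(AddCircle T, ℂ)) ?_
    rw [← fourierSubalgebra_coe]
    exact hg

variable {G : AddCircle T → AddCircle T}

lemma measurePreserving_of_fourierCoeff_fourier_comp (hG : Measurable G)
    (h : ∀ k : ℕ, 0 < k → fourierCoeff (fourier (k : ℤ) ∘ G) 0 = 0) :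
    MeasurePreserving G haarAddCircle haarAddCircle := by
  have := Measure.isProbabilityMeasure_map (μ := haarAddCircle) hG.aemeasurable
  have hmean : ∀ φ : AddCircle T → ℂ, ∫ x, φ x ∂haarAddCircle = fourierCoeff φ 0 := fun φ => by
    simp [fourierCoeff]
  refine ⟨hG, measure_ext_of_integral_fourier fun k => ?_⟩
  rw [integral_map hG.aemeasurable (fourier k).continuous.aestronglyMeasurable, hmean, hmean,
    fourierCoeff_fourier]
  obtain ⟨n, rfl | rfl⟩ := k.eq_nat_or_neg
  all_goals
    obtain rfl | hn := n.eq_zero_or_pos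
    · simp [fourierCoeff]
    rw [Pi.single_eq_of_ne (by omega)]
  · exact h n hn
  · simp only [fourier_neg]
    rw [fourierCoeff_conj, neg_zero]
    exact (congrArg conj (h n hn)).trans (map_zero _)

lemma fourierCoeff_comp_eq_sum (hG : MeasurePreserving G haarAddCircle haarAddCircle) {n : ℤ}
    {s : Finset ℤ} (hs : ∀ k ∉ s, fourierCoeff (fourier k ∘ G) n = 0)
    {φ : AddCircle T → ℂ} (hφ : MemLp φ 2 haarAddCircle) :
    fourierCoeff (φ ∘ G) n =
      ∑ k ∈ s, fourierCoeff (fourier k ∘ G) n * fourierCoeff φ k := by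
  let koopman : Lp ℂ 2 haarAddCircle →L[ℂ] Lp ℂ 2 haarAddCircle :=
    (Lp.compMeasurePreservingₗᵢ ℂ G hG).toContinuousLinearMap
  let coeffComp : Lp ℂ 2 haarAddCircle →L[ℂ] ℂ :=
    (innerSL ℂ (fourierLp (T := T) 2 n)).comp koopman
  have hcoeff : ∀ {ψ : AddCircle T → ℂ} {u : Lp ℂ 2 haarAddCircle}, u =ᵐ[haarAddCircle] ψ →
      coeffComp u = fourierCoeff (ψ ∘ G) n := by
    intro ψ u hu
    have hcomp : koopman u =ᵐ[haarAddCircle] ψ ∘ G :=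
      (Lp.coeFn_compMeasurePreserving u hG).trans (hG.quasiMeasurePreserving.ae_eq_comp hu)
    rw [← fourierCoeff_congr_ae hcomp, ← fourierBasis_repr, HilbertBasis.repr_apply_apply,
      coe_fourierBasis]
    rfl
  have hsum : HasSum (fun k => fourierCoeff (fourier k ∘ G) n * fourierCoeff φ k)
      (fourierCoeff (φ ∘ G) n) := by
    have := (hasSum_fourier_series_L2 (hφ.toLp φ)).mapL coeffComp
    simp only [map_smul, smul_eq_mul, hcoeff hφ.coeFn_toLp, hcoeff (coeFn_fourierLp 2 _),
      fourierCoeff_congr_ae hφ.coeFn_toLp] at this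
    simpa only [mul_comm] using this
  exact hsum.unique (hasSum_sum_of_ne_finset_zero fun k hk => by rw [hs k hk, zero_mul])

end Fourier

section BoundaryMap

local instance fact_zero_lt_two_pi : Fact (0 < 2 * Real.pi) := ⟨Real.two_pi_pos⟩

local notation "𝕋" => AddCircle (2 * Real.pi)

lemma fourier_one_coe_eq_circleMap (θ : ℝ) : fourier 1 (θ : 𝕋) = circleMap 0 1 θ := by
  have : (2 * Real.pi : ℂ) ≠ 0 := by exact_mod_cast Real.two_pi_pos.ne'
  rw [fourier_coe_apply, circleMap_zero, Complex.ofReal_one, one_mul]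
  congr 1
  push_cast
  field_simp

lemma continuous_ofReal_mul_fourier_one (r : ℝ) : Continuous fun x : 𝕋 => (r : ℂ) * fourier 1 x :=
  continuous_const.mul (fourier 1).continuous

lemma ofReal_mul_fourier_one_mem_ball {r : ℝ} (hr : r ∈ Ioo 0 1) (x : 𝕋) :
    (r : ℂ) * fourier 1 x ∈ ball (0 : ℂ) 1 := by
  rw [mem_ball_zero_iff, norm_mul, norm_fourier_apply, mul_one, Complex.norm_real,
    Real.norm_of_nonneg hr.1.le]
  exact hr.2

lemma integral_fourier_one_eq_circleAverage {E : Type*} [NormedAddCommGroup E] [NormedSpace ℝ E]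
    (h : ℂ → E) (r : ℝ) :
    ∫ x : 𝕋, h (r * fourier 1 x) ∂haarAddCircle = Real.circleAverage h 0 r := by
  rw [integral_haarAddCircle, Real.circleAverage_def,
    ← AddCircle.intervalIntegral_preimage (2 * Real.pi) 0, zero_add]
  congr 1
  refine intervalIntegral.integral_congr fun θ _ => ?_
  simp only [fourier_one_coe_eq_circleMap, circleMap_zero, Complex.ofReal_one, one_mul]

/-- `K` is almost everywhere the radial limit of the function `h` on the unit disc, the unit circle
being parametrized by `fourier 1 : 𝕋 → ℂ`. -/
def HasRadialLimit {E : Type*} [TopologicalSpace E] (h : ℂ → E) (K : 𝕋 → E) : Prop :=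
  ∀ᵐ x ∂haarAddCircle, Tendsto (fun r : ℝ => h (r * fourier 1 x)) (𝓝[<] 1) (𝓝 (K x))

namespace HasRadialLimit

lemma id : HasRadialLimit (fun z => z) (fourier 1) := by
  refine Eventually.of_forall fun x => tendsto_nhdsWithin_of_tendsto_nhds ?_
  have : Continuous fun r : ℝ => (r : ℂ) * fourier 1 x := by fun_prop
  simpa using this.tendsto 1

lemma pow {h : ℂ → ℂ} {K : 𝕋 → ℂ} (hK : HasRadialLimit h K) (n : ℕ) :
    HasRadialLimit (fun z => h z ^ n) (fun x => K x ^ n) := by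
  filter_upwards [hK] with x hx using hx.pow n

lemma aemeasurable {h : ℂ → ℂ} {K : 𝕋 → ℂ} (hK : HasRadialLimit h K)
    (hh : ContinuousOn h (ball 0 1)) : AEMeasurable K haarAddCircle := by
  obtain ⟨r, -, hr, hlim⟩ := exists_seq_strictMono_tendsto' (zero_lt_one' ℝ)
  refine aemeasurable_of_tendsto_metrizable_ae atTop
    (f := fun n x => h (r n * fourier 1 x)) (fun n => ?_) ?_
  · exact (hh.comp_continuous (continuous_ofReal_mul_fourier_one _)
      (ofReal_mul_fourier_one_mem_ball (hr n))).aemeasurable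
  · filter_upwards [hK] with x hx
    exact hx.comp (tendsto_nhdsWithin_iff.2 ⟨hlim, Eventually.of_forall fun n => (hr n).2⟩)

variable {E : Type*} [NormedAddCommGroup E] [NormedSpace ℂ E] {h : ℂ → E} {K : 𝕋 → E} {B : ℝ}

lemma smul {g : ℂ → ℂ} {L : 𝕋 → ℂ} (hL : HasRadialLimit g L) (hK : HasRadialLimit h K) :
    HasRadialLimit (fun z => g z • h z) (fun x => L x • K x) := by
  filter_upwards [hL, hK] with x hLx hKx using hLx.smul hKx

lemma dslope_zero (hK : HasRadialLimit h K) (h0 : h 0 = 0) :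
    HasRadialLimit (dslope h 0) (fun x => fourier (-1) x • K x) := by
  filter_upwards [hK, HasRadialLimit.id] with x hx hid
  have hx0 : fourier 1 x ≠ 0 := norm_ne_zero_iff.1 (by simp)
  have hinv : fourier (-1) x = (fourier 1 x)⁻¹ :=
    eq_inv_of_mul_eq_one_left (by rw [← fourier_add, neg_add_cancel, fourier_zero])
  rw [hinv]
  refine ((hid.inv₀ hx0).smul hx).congr' ?_
  filter_upwards [Ioo_mem_nhdsLT (zero_lt_one' ℝ)] with r hr
  have hr0 : (r : ℂ) * fourier 1 x ≠ 0 := mul_ne_zero (Complex.ofReal_ne_zero.2 hr.1.ne') hx0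
  rw [dslope_of_ne _ hr0, slope_def_module, h0, sub_zero, sub_zero]

variable [CompleteSpace E]

lemma integral_eq (hK : HasRadialLimit h K) (hh : DifferentiableOn ℂ h (ball 0 1))
    (hB : ∀ w ∈ ball (0 : ℂ) 1, ‖h w‖ ≤ B) : ∫ x, K x ∂haarAddCircle = h 0 := by
  have hr : ∀ᶠ r : ℝ in 𝓝[<] 1, r ∈ Ioo 0 1 := Ioo_mem_nhdsLT zero_lt_one
  have hlim : Tendsto (fun r : ℝ => ∫ x : 𝕋, h (r * fourier 1 x) ∂haarAddCircle) (𝓝[<] 1)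
      (𝓝 (∫ x, K x ∂haarAddCircle)) := by
    refine tendsto_integral_filter_of_dominated_convergence (fun _ => B) ?_ ?_
      (integrable_const _) hK
    · filter_upwards [hr] with r hr
      exact (hh.continuousOn.comp_continuous (continuous_ofReal_mul_fourier_one r)
        (ofReal_mul_fourier_one_mem_ball hr)).aestronglyMeasurable
    · filter_upwards [hr] with r hr
      exact Eventually.of_forall fun x => hB _ (ofReal_mul_fourier_one_mem_ball hr x)
  refine tendsto_nhds_unique hlim (tendsto_const_nhds.congr' ?_)
  filter_upwards [hr] with r hr
  rw [integral_fourier_one_eq_circleAverage]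
  refine (DifferentiableOn.diffContOnCl_ball hh ?_).circleAverage.symm
  rw [abs_of_pos hr.1]
  exact closedBall_subset_ball hr.2

lemma fourierCoeff_zero (hK : HasRadialLimit h K) (hh : DifferentiableOn ℂ h (ball 0 1))
    (hB : ∀ w ∈ ball (0 : ℂ) 1, ‖h w‖ ≤ B) : fourierCoeff K 0 = h 0 := by
  simpa [fourierCoeff] using hK.integral_eq hh hB

lemma fourierCoeff_of_neg (hK : HasRadialLimit h K) (hh : DifferentiableOn ℂ h (ball 0 1))
    (hB : ∀ w ∈ ball (0 : ℂ) 1, ‖h w‖ ≤ B) {n : ℤ} (hn : n < 0) : fourierCoeff K n = 0 := by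
  obtain ⟨j, hj⟩ := Int.eq_ofNat_of_zero_le (neg_nonneg.2 hn.le)
  have hj0 : j ≠ 0 := by omega
  have hshift := (((HasRadialLimit.id.pow j).smul hK).integral_eq (B := B)
    ((differentiableOn_id.pow j).smul hh) fun w hw => ?_)
  · simpa [fourierCoeff, hj, fourier_natCast, hj0, -fourier_apply] using hshift
  · rw [norm_smul, norm_pow]
    have hw1 : ‖w‖ ≤ 1 := (mem_ball_zero_iff.1 hw).le
    exact (mul_le_of_le_one_left (norm_nonneg _) (pow_le_one₀ (norm_nonneg _) hw1)).trans (hB w hw)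

end HasRadialLimit

/-- `G` is the boundary map of `f`: a holomorphic self-map `f` of the unit disc fixing `0` whose
radial limits lie almost everywhere on the unit circle, i.e. an inner function with `f 0 = 0`, is
recorded together with the self-map `G` of `𝕋` that it induces through `fourier 1 : 𝕋 → ℂ`. -/
structure IsBoundaryMap (f : ℂ → ℂ) (G : 𝕋 → 𝕋) : Prop where
  differentiableOn : DifferentiableOn ℂ f (ball 0 1)
  mapsTo : MapsTo f (ball 0 1) (ball 0 1)
  map_zero : f 0 = 0
  measurable : Measurable G
  hasRadialLimit : HasRadialLimit f (fourier 1 ∘ G)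

namespace IsBoundaryMap

variable {f : ℂ → ℂ} {G : 𝕋 → 𝕋}

lemma hasRadialLimit_dslope_pow (hG : IsBoundaryMap f G) (k : ℕ) :
    HasRadialLimit (fun z => dslope f 0 z ^ k)
      (fun x => fourier (-k : ℤ) x • (fourier (k : ℤ) ∘ G) x) := by
  have hpow : ∀ x, (fourier (-1) x • (fourier 1 ∘ G) x) ^ k =
      fourier (-k : ℤ) x • (fourier (k : ℤ) ∘ G) x := fun x => by
    simp only [Function.comp_apply, smul_eq_mul, mul_pow, fourier_neg, fourier_natCast, map_pow]
  simpa only [hpow] using (hG.hasRadialLimit.dslope_zero hG.map_zero).pow k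

lemma differentiableOn_dslope_pow (hG : IsBoundaryMap f G) (k : ℕ) :
    DifferentiableOn ℂ (fun z => dslope f 0 z ^ k) (ball 0 1) :=
  ((Complex.differentiableOn_dslope (ball_mem_nhds 0 one_pos)).2 hG.differentiableOn).pow k

lemma mapsTo_closedBall (hG : IsBoundaryMap f G) : MapsTo f (ball 0 1) (closedBall (f 0) 1) := by
  rw [hG.map_zero]
  exact hG.mapsTo.mono_right ball_subset_closedBall

lemma norm_dslope_pow_le_one (hG : IsBoundaryMap f G) (k : ℕ) :
    ∀ w ∈ ball (0 : ℂ) 1, ‖dslope f 0 w ^ k‖ ≤ 1 := by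
  intro w hw
  rw [norm_pow]
  refine pow_le_one₀ (norm_nonneg _) ?_
  simpa using Complex.norm_dslope_le_div_of_mapsTo_ball hG.differentiableOn hG.mapsTo_closedBall hw

lemma fourierCoeff_fourier_comp_self (hG : IsBoundaryMap f G) (k : ℕ) :
    fourierCoeff (fourier (k : ℤ) ∘ G) k = deriv f 0 ^ k := by
  have := (hG.hasRadialLimit_dslope_pow k).fourierCoeff_zero (hG.differentiableOn_dslope_pow k)
    (hG.norm_dslope_pow_le_one k)
  rwa [fourierCoeff_fourier_smul, zero_sub, neg_neg, dslope_same] at this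

lemma fourierCoeff_fourier_comp_of_lt (hG : IsBoundaryMap f G) {k : ℕ} {n : ℤ} (hnk : n < k) :
    fourierCoeff (fourier (k : ℤ) ∘ G) n = 0 := by
  have := (hG.hasRadialLimit_dslope_pow k).fourierCoeff_of_neg (hG.differentiableOn_dslope_pow k)
    (hG.norm_dslope_pow_le_one k) (sub_neg.2 hnk)
  rwa [fourierCoeff_fourier_smul, sub_neg_eq_add, sub_add_cancel] at this

lemma measurePreserving (hG : IsBoundaryMap f G) :
    MeasurePreserving G haarAddCircle haarAddCircle :=
  measurePreserving_of_fourierCoeff_fourier_comp hG.measurable fun _ hk =>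
    hG.fourierCoeff_fourier_comp_of_lt (Int.natCast_pos.2 hk)

lemma fourierCoeff_fourier_comp_eq_zero (hG : IsBoundaryMap f G) {k n : ℤ} (hn : 0 < n)
    (hk : k ∉ Finset.Icc 1 n) : fourierCoeff (fourier k ∘ G) n = 0 := by
  rw [Finset.mem_Icc, not_and_or] at hk
  obtain ⟨j, rfl | rfl⟩ := k.eq_nat_or_neg
  · obtain rfl | hj := j.eq_zero_or_pos
    · have hconst : (fourier ((0 : ℕ) : ℤ) ∘ G) = fourier (T := 2 * Real.pi) 0 := by ext; simp
      rw [hconst, fourierCoeff_fourier, Pi.single_eq_of_ne hn.ne']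
    · exact hG.fourierCoeff_fourier_comp_of_lt (by omega)
  · have hconj : (fourier (-j : ℤ) ∘ G) = fun x => conj ((fourier (j : ℤ) ∘ G) x) :=
      funext fun x => fourier_neg
    rw [hconj, fourierCoeff_conj, hG.fourierCoeff_fourier_comp_of_lt (by omega), _root_.map_zero]

lemma fourierCoeff_comp (hG : IsBoundaryMap f G) {φ : 𝕋 → ℂ} (hφ : MemLp φ 2 haarAddCircle)
    {n : ℕ} (hn : 0 < n) :
    fourierCoeff (φ ∘ G) n = ∑ k ∈ Finset.Icc 1 n,
      fourierCoeff (fourier (k : ℤ) ∘ G) n * fourierCoeff φ k := by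
  have hIcc : (Finset.Icc 1 n).map Nat.castEmbedding = Finset.Icc (1 : ℤ) n :=
    Finset.coe_injective (by simpa using Nat.image_cast_int_Icc 1 n)
  rw [fourierCoeff_comp_eq_sum hG.measurePreserving
    (fun k hk => hG.fourierCoeff_fourier_comp_eq_zero (Int.natCast_pos.2 hn) hk) hφ, ← hIcc,
    Finset.sum_map]
  rfl

lemma fourierCoeff_comp_iterate_one (hG : IsBoundaryMap f G) {φ : 𝕋 → ℂ}
    (hφ : MemLp φ 2 haarAddCircle) (b : ℕ) :
    fourierCoeff (φ ∘ G^[b]) 1 = deriv f 0 ^ b * fourierCoeff φ 1 := by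
  induction b with
  | zero => simp
  | succ b ih =>
    have hderiv : fourierCoeff (fourier 1 ∘ G) 1 = deriv f 0 := by
      simpa using hG.fourierCoeff_fourier_comp_self 1
    have hstep := hG.fourierCoeff_comp
      (hφ.comp_measurePreserving (hG.measurePreserving.iterate b)) one_pos
    simp only [Finset.Icc_self, Finset.sum_singleton, Nat.cast_one] at hstep
    rw [Function.iterate_succ, ← Function.comp_assoc, hstep, hderiv, ih]
    ring

lemma exists_norm_fourierCoeff_comp_iterate_le_of_pos (hG : IsBoundaryMap f G)
    (h0 : deriv f 0 ≠ 0) (h1 : ‖deriv f 0‖ < 1) {n : ℕ} (hn : 0 < n) :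
    ∃ K : ℝ, 0 ≤ K ∧ ∀ φ : 𝕋 → ℂ, MemLp φ 2 haarAddCircle → (∀ k, ‖fourierCoeff φ k‖ ≤ 1) →
      ∀ b, ‖fourierCoeff (φ ∘ G^[b]) n‖ ≤ K * ‖deriv f 0‖ ^ b := by
  obtain ⟨K, hK0, hK⟩ := exists_norm_le_mul_pow_of_triangular_recursion
    (M := fun n k => fourierCoeff (fourier (k : ℤ) ∘ G) n) (norm_pos_iff.2 h0) h1
    (fun n _ => by rw [hG.fourierCoeff_fourier_comp_self, norm_pow]) hn
  refine ⟨K, hK0, fun φ hφ hφ1 => hK (fun b n => fourierCoeff (φ ∘ G^[b]) n)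
    (fun n => hφ1 n) fun b n hn => ?_⟩
  simp only [Function.iterate_succ, ← Function.comp_assoc]
  exact hG.fourierCoeff_comp (hφ.comp_measurePreserving (hG.measurePreserving.iterate b)) hn

lemma exists_norm_fourierCoeff_comp_iterate_le (hG : IsBoundaryMap f G) (h0 : deriv f 0 ≠ 0)
    (h1 : ‖deriv f 0‖ < 1) {n : ℤ} (hn : n ≠ 0) :
    ∃ K : ℝ, 0 ≤ K ∧ ∀ φ : 𝕋 → ℂ, MemLp φ 2 haarAddCircle → (∀ k, ‖fourierCoeff φ k‖ ≤ 1) →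
      ∀ b, ‖fourierCoeff (φ ∘ G^[b]) n‖ ≤ K * ‖deriv f 0‖ ^ b := by
  obtain ⟨K, hK0, hK⟩ :=
    hG.exists_norm_fourierCoeff_comp_iterate_le_of_pos h0 h1 (Int.natAbs_pos.2 hn)
  refine ⟨K, hK0, fun φ hφ hφ1 b => ?_⟩
  obtain hpos | hneg := hn.lt_or_gt.symm
  · simpa [abs_of_pos hpos] using hK φ hφ hφ1 b
  · have hconj := hK (fun x => conj (φ x)) hφ.star
      (fun k => by rw [fourierCoeff_conj, RCLike.norm_conj]; exact hφ1 _) b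
    have hcomp : (fun x => conj (φ x)) ∘ G^[b] = fun x => conj ((φ ∘ G^[b]) x) := rfl
    rw [hcomp, fourierCoeff_conj, RCLike.norm_conj] at hconj
    simpa [abs_of_neg hneg] using hconj

lemma exists_norm_fourierCoeff_one_le (hG : IsBoundaryMap f G) (h1 : ‖deriv f 0‖ < 1) {j : ℤ}
    (hj : j ≠ 1) :
    ∃ C : ℝ, 0 ≤ C ∧ ∀ φ : 𝕋 → ℂ, MemLp φ 2 haarAddCircle → (∀ k, ‖fourierCoeff φ k‖ ≤ 1) →
      ∀ p q, 0 < p → ‖fourierCoeff ((fun x => fourier j x • (φ ∘ G^[q]) x) ∘ G^[p]) 1‖ ≤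
        C * ‖deriv f 0‖ ^ (p + q) := by
  have hfactor : ∀ φ : 𝕋 → ℂ, MemLp φ 2 haarAddCircle → ∀ p q,
      fourierCoeff ((fun x => fourier j x • (φ ∘ G^[q]) x) ∘ G^[p]) 1 =
        deriv f 0 ^ p * fourierCoeff (φ ∘ G^[q]) (1 - j) := by
    intro φ hφ p q
    have hφq := hφ.comp_measurePreserving (hG.measurePreserving.iterate q)
    rw [hG.fourierCoeff_comp_iterate_one, fourierCoeff_fourier_smul]
    refine hφq.of_le ((fourier j).continuous.aestronglyMeasurable.smul hφq.1)
      (Eventually.of_forall fun x => ?_)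
    rw [norm_smul, norm_fourier_apply, one_mul]
  obtain h0 | h0 := eq_or_ne (deriv f 0) 0
  · refine ⟨0, le_rfl, fun φ hφ _ p q hp => ?_⟩
    rw [hfactor φ hφ, h0, zero_pow hp.ne', zero_mul, norm_zero, zero_mul]
  · obtain ⟨K, hK0, hK⟩ :=
      hG.exists_norm_fourierCoeff_comp_iterate_le h0 h1 (sub_ne_zero.2 hj.symm)
    refine ⟨K, hK0, fun φ hφ hφ1 p q _ => ?_⟩
    rw [hfactor φ hφ, norm_mul, norm_pow, pow_add, mul_left_comm]
    gcongr
    exact hK φ hφ hφ1 q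

lemma integral_fourier_iterate_eq_fourierCoeff (hG : IsBoundaryMap f G) (ε k : ℤ) (n p q : ℕ) :
    ∫ x, fourier (-1) (G^[n] x) * fourier ε (G^[n + p] x) ^ 2 * fourier k (G^[n + p + q] x)
      ∂haarAddCircle =
    fourierCoeff ((fun x => fourier (2 * ε) x • (fourier k ∘ G^[q]) x) ∘ G^[p]) 1 := by
  have hmeas : ∀ (k : ℤ) (n : ℕ), Measurable fun x => fourier k (G^[n] x) := fun k n =>
    (fourier k).continuous.measurable.comp (hG.measurable.iterate n)
  have hint := integral_map (μ := haarAddCircle) (hG.measurable.iterate n).aemeasurable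
    (f := fun x => fourier (-1) x * (fourier (2 * ε) (G^[p] x) * fourier k (G^[q + p] x)))
    (((hmeas (-1) 0).mul ((hmeas _ p).mul (hmeas k (q + p)))).aestronglyMeasurable)
  rw [(hG.measurePreserving.iterate n).map_eq] at hint
  simp only [fourierCoeff, Function.comp_apply, smul_eq_mul, ← Function.iterate_add_apply]
  rw [hint]
  simp only [← Function.iterate_add_apply, two_mul, fourier_add, ← pow_two, mul_assoc]
  simp only [add_comm, add_left_comm]

theorem exists_norm_integral_fourier_iterate_le (hG : IsBoundaryMap f G) (h1 : ‖deriv f 0‖ < 1) :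
    ∃ C : ℝ, 0 < C ∧ ∀ ε₁ ε₂ k : ℤ, (ε₁ = 1 ∨ ε₁ = -1) → (ε₂ = 1 ∨ ε₂ = -1) →
      ∀ n₁ n₂ n₃ : ℕ, n₁ < n₂ → n₂ ≤ n₃ →
        ‖∫ x, fourier ε₁ (G^[n₁] x) * fourier ε₂ (G^[n₂] x) ^ 2 * fourier k (G^[n₃] x)
          ∂haarAddCircle‖ ≤ C * ‖deriv f 0‖ ^ (n₃ - n₁) := by
  obtain ⟨C₁, hC₁0, hC₁⟩ := hG.exists_norm_fourierCoeff_one_le h1 (j := 2 * 1) (by norm_num)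
  obtain ⟨C₂, hC₂0, hC₂⟩ := hG.exists_norm_fourierCoeff_one_le h1 (j := 2 * -1) (by norm_num)
  have hneg : ∀ ε₂ k : ℤ, (ε₂ = 1 ∨ ε₂ = -1) → ∀ n₁ n₂ n₃ : ℕ, n₁ < n₂ → n₂ ≤ n₃ →
      ‖∫ x, fourier (-1) (G^[n₁] x) * fourier ε₂ (G^[n₂] x) ^ 2 * fourier k (G^[n₃] x)
        ∂haarAddCircle‖ ≤ (C₁ + C₂ + 1) * ‖deriv f 0‖ ^ (n₃ - n₁) := by
    intro ε₂ k hε₂ n₁ n₂ n₃ h12 h23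
    obtain ⟨p, rfl⟩ := Nat.exists_eq_add_of_le h12.le
    obtain ⟨q, rfl⟩ := Nat.exists_eq_add_of_le h23
    have hp : 0 < p := by omega
    rw [hG.integral_fourier_iterate_eq_fourierCoeff, add_assoc n₁, Nat.add_sub_cancel_left]
    obtain rfl | rfl := hε₂
    · refine (hC₁ _ (memLp_fourier k 2) (norm_fourierCoeff_fourier_le_one k) p q hp).trans ?_
      gcongr
      linarith
    · refine (hC₂ _ (memLp_fourier k 2) (norm_fourierCoeff_fourier_le_one k) p q hp).trans ?_
      gcongr
      linarith
  refine ⟨C₁ + C₂ + 1, by positivity, ?_⟩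
  rintro ε₁ ε₂ k (rfl | rfl) hε₂ n₁ n₂ n₃ h12 h23
  · refine le_of_eq_of_le ?_ (hneg (-ε₂) (-k) (by omega) n₁ n₂ n₃ h12 h23)
    rw [← RCLike.norm_conj, ← integral_conj]
    simp only [map_mul, map_pow, ← fourier_neg]
  · exact hneg ε₂ k hε₂ n₁ n₂ n₃ h12 h23

lemma norm_deriv_lt_one (hG : IsBoundaryMap f G)
    (hrot : ¬ ∃ c : ℂ, EqOn f (fun w => c * w) (ball 0 1)) : ‖deriv f 0‖ < 1 := by
  refine lt_of_le_of_ne (Complex.norm_deriv_le_one_of_mapsTo_ball hG.differentiableOn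
    hG.mapsTo_closedBall one_pos) fun heq => hrot ⟨deriv f 0, fun w hw => ?_⟩
  have := Complex.affine_of_mapsTo_ball_of_norm_dslope_eq_div hG.differentiableOn
    hG.mapsTo_closedBall (mem_ball_self one_pos) (by rw [dslope_same, heq, div_one]) hw
  simpa [hG.map_zero, mul_comm] using this

lemma iterate_fourier_one_ae_eq (hG : IsBoundaryMap f G) {F : ℂ → ℂ}
    (hF : ∀ᵐ x ∂haarAddCircle, fourier 1 (G x) = F (fourier 1 x)) (n : ℕ) :
    ∀ᵐ x ∂haarAddCircle, F^[n] (fourier 1 x) = fourier 1 (G^[n] x) := by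
  induction n with
  | zero => exact Eventually.of_forall fun _ => rfl
  | succ n ih =>
    filter_upwards [hF, hG.measurePreserving.quasiMeasurePreserving.ae ih] with x hx hn
    rw [Function.iterate_succ_apply, Function.iterate_succ_apply, ← hx, hn]

end IsBoundaryMap

lemma exists_measurable_fourier_one_ae_eq {K : 𝕋 → ℂ} (hK : AEMeasurable K haarAddCircle)
    (hnorm : ∀ᵐ x ∂haarAddCircle, ‖K x‖ = 1) :
    ∃ G : 𝕋 → 𝕋, Measurable G ∧ ∀ᵐ x ∂haarAddCircle, fourier 1 (G x) = K x := by
  refine ⟨fun x => (Complex.arg (hK.mk K x) : 𝕋),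
    AddCircle.measurable_mk'.comp (Complex.measurable_arg.comp hK.measurable_mk), ?_⟩
  filter_upwards [hK.ae_eq_mk, hnorm] with x hx h1
  rw [fourier_one_coe_eq_circleMap, ← hx, circleMap_zero, Complex.ofReal_one, one_mul]
  simpa [h1] using Complex.norm_mul_exp_arg_mul_I (K x)

lemma exists_isBoundaryMap {f F : ℂ → ℂ} (hf : DifferentiableOn ℂ f (ball 0 1))
    (hmap : MapsTo f (ball 0 1) (ball 0 1)) (h0 : f 0 = 0)
    (hF : HasRadialLimit f fun x => F (fourier 1 x))
    (hinner : ∀ᵐ x : 𝕋 ∂haarAddCircle, ‖F (fourier 1 x)‖ = 1) :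
    ∃ G, IsBoundaryMap f G ∧ ∀ᵐ x ∂haarAddCircle, fourier 1 (G x) = F (fourier 1 x) := by
  obtain ⟨G, hGm, hGF⟩ :=
    exists_measurable_fourier_one_ae_eq (hF.aemeasurable hf.continuousOn) hinner
  refine ⟨G, ⟨hf, hmap, h0, hGm, ?_⟩, hGF⟩
  filter_upwards [hF, hGF] with x hx hGx
  rwa [Function.comp_apply, hGx]

lemma measurableEmbedding_fourier_one : MeasurableEmbedding (fourier 1 : 𝕋 → ℂ) := by
  refine ((fourier 1).continuous.isClosedEmbedding fun x y hxy => ?_).measurableEmbedding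
  rw [fourier_one, fourier_one] at hxy
  exact injective_toCircle Real.two_pi_pos.ne' (Subtype.ext hxy)

lemma m_eq_map_fourier_one : m = Measure.map (fourier 1 : 𝕋 → ℂ) haarAddCircle := by
  have hT : ENNReal.ofReal (2 * Real.pi) ≠ 0 := by simpa using Real.two_pi_pos
  have hhaar : (haarAddCircle : Measure 𝕋) = (ENNReal.ofReal (2 * Real.pi))⁻¹ • volume := by
    rw [volume_eq_smul_haarAddCircle, smul_smul, ENNReal.inv_mul_cancel hT ENNReal.ofReal_ne_top,
      one_smul]
  have hvol : (volume : Measure 𝕋) =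
      Measure.map (fun θ : ℝ => (θ : 𝕋)) (volume.restrict (Ioc 0 (2 * Real.pi))) := by
    simpa using (AddCircle.measurePreserving_mk (2 * Real.pi) 0).map_eq.symm
  have hexp : (fun θ : ℝ => Complex.exp (θ * Complex.I)) =
      (fourier 1 : 𝕋 → ℂ) ∘ fun θ : ℝ => (θ : 𝕋) := funext fun θ => by
    simp [fourier_one_coe_eq_circleMap, circleMap_zero, -fourier_apply]
  rw [hhaar, hvol, Measure.map_smul,
    Measure.map_map measurableEmbedding_fourier_one.measurable AddCircle.measurable_mk', m, hexp]

lemma ae_m_iff {p : ℂ → Prop} :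
    (∀ᵐ z ∂m, p z) ↔ ∀ᵐ x : 𝕋 ∂haarAddCircle, p (fourier 1 x) := by
  rw [m_eq_map_fourier_one, measurableEmbedding_fourier_one.ae_map_iff]

lemma integral_m {E : Type*} [NormedAddCommGroup E] [NormedSpace ℝ E] (g : ℂ → E) :
    ∫ z, g z ∂m = ∫ x : 𝕋, g (fourier 1 x) ∂haarAddCircle := by
  rw [m_eq_map_fourier_one, measurableEmbedding_fourier_one.integral_map]

lemma spow_fourier_one_eq_fourier {F : ℂ → ℂ} {ε : ℤ} (hε : ε = 1 ∨ ε = -1) {n : ℕ} {x y : 𝕋}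
    (h : F^[n] (fourier 1 x) = fourier 1 y) : spow F ε n (fourier 1 x) = fourier ε y := by
  obtain rfl | rfl := hε
  · rw [spow, if_pos rfl, h]
  · rw [spow, if_neg (by norm_num), h, fourier_neg]

end BoundaryMap

theorem stmt7 (f F : ℂ → ℂ)
    (hf : DifferentiableOn ℂ f (Metric.ball 0 1))
    (hmap : Set.MapsTo f (Metric.ball 0 1) (Metric.ball 0 1))
    (h0 : f 0 = 0)
    (hbd : ∀ᵐ z ∂m, Filter.Tendsto (fun r : ℝ => f ((r : ℂ) * z))
      (nhdsWithin 1 (Set.Iio 1)) (nhds (F z)))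
    (hinner : ∀ᵐ z ∂m, ‖F z‖ = 1)
    (hrot : ¬ ∃ c : ℂ, Set.EqOn f (fun w => c * w) (Metric.ball 0 1)) :
    ∃ C : ℝ, 0 < C ∧ ∀ ε₁ ε₂ ε₃ : ℤ,
      (ε₁ = 1 ∨ ε₁ = -1) → (ε₂ = 1 ∨ ε₂ = -1) → (ε₃ = 1 ∨ ε₃ = -1) →
      ∀ n₁ n₂ n₃ : ℕ, 0 < n₁ → n₁ < n₂ → n₂ < n₃ →
        ‖∫ z, spow F ε₁ n₁ z * (spow F ε₂ n₂ z) ^ 2 * spow F ε₃ n₃ z ∂m‖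
          ≤ C * ‖deriv f 0‖ ^ (n₃ - n₁) := by
  have : Fact (0 < 2 * Real.pi) := ⟨Real.two_pi_pos⟩
  rw [ae_m_iff] at hbd hinner
  obtain ⟨G, hG, hGF⟩ := exists_isBoundaryMap hf hmap h0 hbd hinner
  obtain ⟨C, hC0, hC⟩ := hG.exists_norm_integral_fourier_iterate_le (hG.norm_deriv_lt_one hrot)
  refine ⟨C, hC0, fun ε₁ ε₂ ε₃ hε₁ hε₂ hε₃ n₁ n₂ n₃ _ h12 h23 => ?_⟩
  refine le_of_eq_of_le ?_ (hC ε₁ ε₂ ε₃ hε₁ hε₂ n₁ n₂ n₃ h12 h23.le)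
  rw [integral_m]
  congr 1
  refine integral_congr_ae ?_
  filter_upwards [hG.iterate_fourier_one_ae_eq hGF n₁, hG.iterate_fourier_one_ae_eq hGF n₂,
    hG.iterate_fourier_one_ae_eq hGF n₃] with x hx₁ hx₂ hx₃
  rw [spow_fourier_one_eq_fourier hε₁ hx₁, spow_fourier_one_eq_fourier hε₂ hx₂,
    spow_fourier_one_eq_fourier hε₃ hx₃]
end

section
/- Let f be an inner function with f(0)=0 which is not a rotation, and ε_1,ε_2,ε_3,ε_4 ∈ {1,−1} with ε_1ε_2 = ε_3ε_4 = −1. Then for all positive integers n_1<n_2<n_3<n_4, the absolute value of ∫_{∂𝔻} f^{ε_1 n_1} f^{ε_2 n_2} f^{ε_3 n_3} f^{ε_4 n_4} dm equals |f'(0)|^{(n_2−n_1)+(n_4−n_3)}. -/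
open MeasureTheory Set Metric Filter Complex

/-!
Cauchy's formula computes the moments of the boundary map `F` under the measures
`(1 + Re (c z)) dm`, and a measure on the circle is determined by its moments. Hence `F` pushes
`(1 + Re (c z)) dm` forward to `(1 + Re (c a z)) dm`, where `a := conj f'(0)`. For `c = 0`
this says that `F` preserves `m`; comparing the terms linear in `c` gives
`∫ z g(F z) dm = a ∫ z g dm` for every `g ∈ L¹(m)`. Iterating, each pair of factors with opposite
signs can be split off the correlation integral, at the cost of a power of `f'(0)` or of its
conjugate.
-/

open scoped ComplexConjugate Topology

lemma hasSum_charFun_of_norm_le {E : Type*} [NormedAddCommGroup E] [InnerProductSpace ℝ E]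
    [MeasurableSpace E] [OpensMeasurableSpace E] {μ : Measure E} [IsFiniteMeasure μ] {C : ℝ}
    (hμ : ∀ᵐ x ∂μ, ‖x‖ ≤ C) (t : E) :
    HasSum (fun n : ℕ ↦ (∫ x, inner ℝ x t ^ n ∂μ : ℝ) * (I ^ n / n.factorial))
      (charFun μ t) := by
  simp_rw [charFun_apply, ← integral_complex_ofReal, ofReal_pow, ← integral_mul_const]
  refine hasSum_integral_of_dominated_convergence
    (fun n _ ↦ (C * ‖t‖) ^ n / n.factorial) (fun n ↦ ?_) (fun n ↦ ?_)
    (.of_forall fun _ ↦ Real.summable_pow_div_factorial _) (integrable_const _)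
    (.of_forall fun x ↦ ?_)
  · exact Continuous.aestronglyMeasurable (by fun_prop)
  · filter_upwards [hμ] with x hx
    have inner_le : |inner ℝ x t| ≤ C * ‖t‖ := (abs_real_inner_le_norm x t).trans (by gcongr)
    simp only [norm_mul, norm_div, norm_pow, norm_real, norm_I, one_pow, Real.norm_eq_abs,
      norm_natCast, mul_one_div]
    gcongr
  · simp_rw [mul_div_assoc', ← mul_pow, Complex.exp_eq_exp_ℂ]
    exact NormedSpace.expSeries_div_hasSum_exp _

lemma measure_ext_of_integral_inner_pow {E : Type*} [NormedAddCommGroup E] [InnerProductSpace ℝ E]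
    [MeasurableSpace E] [BorelSpace E] [SecondCountableTopology E] [CompleteSpace E]
    {μ ν : Measure E} [IsFiniteMeasure μ] [IsFiniteMeasure ν] {C : ℝ}
    (hμ : ∀ᵐ x ∂μ, ‖x‖ ≤ C) (hν : ∀ᵐ x ∂ν, ‖x‖ ≤ C)
    (h : ∀ (t : E) (n : ℕ), ∫ x, inner ℝ x t ^ n ∂μ = ∫ x, inner ℝ x t ^ n ∂ν) : μ = ν := by
  refine Measure.ext_of_charFun (funext fun t ↦ ?_)
  have hasSum_μ := hasSum_charFun_of_norm_le hμ t
  simp_rw [h] at hasSum_μ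
  exact hasSum_μ.unique (hasSum_charFun_of_norm_le hν t)

lemma ofReal_inner_pow (z t : ℂ) (n : ℕ) :
    ((inner ℝ z t : ℝ) : ℂ) ^ n = ∑ k ∈ Finset.range (n + 1),
      (conj t / 2) ^ k * (t / 2) ^ (n - k) * n.choose k * (z ^ k * conj z ^ (n - k)) := by
  have inner_eq : ((inner ℝ z t : ℝ) : ℂ) = conj t / 2 * z + t / 2 * conj z := by
    apply Complex.ext <;> simp [Complex.inner] <;> ring
  rw [inner_eq, add_pow]
  refine Finset.sum_congr rfl fun k _ ↦ ?_
  ring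

lemma integrable_pow_mul_conj_pow {μ : Measure ℂ} [IsFiniteMeasure μ] {C : ℝ}
    (hμ : ∀ᵐ z ∂μ, ‖z‖ ≤ C) (i j : ℕ) : Integrable (fun z ↦ z ^ i * conj z ^ j) μ := by
  refine .of_bound (by fun_prop) (C ^ i * C ^ j) (hμ.mono fun z hz ↦ ?_)
  have C_nonneg : 0 ≤ C := (norm_nonneg z).trans hz
  rw [norm_mul, norm_pow, norm_pow, RCLike.norm_conj]
  gcongr

lemma measure_ext_of_integral_pow_mul_conj_pow {μ ν : Measure ℂ}
    [IsFiniteMeasure μ] [IsFiniteMeasure ν]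
    {C : ℝ} (hμ : ∀ᵐ z ∂μ, ‖z‖ ≤ C) (hν : ∀ᵐ z ∂ν, ‖z‖ ≤ C)
    (h : ∀ i j : ℕ, ∫ z, z ^ i * conj z ^ j ∂μ = ∫ z, z ^ i * conj z ^ j ∂ν) : μ = ν := by
  refine measure_ext_of_integral_inner_pow hμ hν fun t n ↦ ?_
  rw [← ofReal_inj, ← integral_complex_ofReal, ← integral_complex_ofReal]
  simp_rw [ofReal_pow, ofReal_inner_pow]
  rw [integral_finsetSum _ fun k _ ↦ (integrable_pow_mul_conj_pow hμ _ _).const_mul _,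
    integral_finsetSum _ fun k _ ↦ (integrable_pow_mul_conj_pow hν _ _).const_mul _]
  simp_rw [integral_const_mul, h]

lemma integral_pow_mul_conj_pow_of_le {μ : Measure ℂ} (hμ : ∀ᵐ z ∂μ, ‖z‖ = 1) {i j : ℕ}
    (hji : j ≤ i) : ∫ z, z ^ i * conj z ^ j ∂μ = ∫ z, z ^ (i - j) ∂μ := by
  refine integral_congr_ae (hμ.mono fun z hz ↦ ?_)
  simp only
  rw [← Nat.sub_add_cancel hji, pow_add, mul_assoc, ← mul_pow, mul_conj', hz]
  simp

lemma measure_ext_of_integral_pow_of_norm_eq_one {μ ν : Measure ℂ}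
    [IsFiniteMeasure μ] [IsFiniteMeasure ν]
    (hμ : ∀ᵐ z ∂μ, ‖z‖ = 1) (hν : ∀ᵐ z ∂ν, ‖z‖ = 1)
    (h : ∀ n : ℕ, ∫ z, z ^ n ∂μ = ∫ z, z ^ n ∂ν) : μ = ν := by
  have of_le {i j : ℕ} (hji : j ≤ i) :
      ∫ z, z ^ i * conj z ^ j ∂μ = ∫ z, z ^ i * conj z ^ j ∂ν := by
    rw [integral_pow_mul_conj_pow_of_le hμ hji, integral_pow_mul_conj_pow_of_le hν hji, h]
  refine measure_ext_of_integral_pow_mul_conj_pow (C := 1) (hμ.mono fun _ ↦ le_of_eq)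
    (hν.mono fun _ ↦ le_of_eq) fun i j ↦ (le_total j i).elim of_le fun hij ↦ ?_
  simpa [← integral_conj, mul_comm] using congrArg conj (of_le hij)

/-- Variant of `MeasurePreserving` for maps that are only almost everywhere measurable, such as
boundary values of holomorphic functions. -/
structure AEMeasurePreserving {α β : Type*} [MeasurableSpace α] [MeasurableSpace β] (T : α → β)
    (μ : Measure α) (ν : Measure β) : Prop where
  aemeasurable : AEMeasurable T μ
  map_eq : μ.map T = ν

namespace AEMeasurePreserving

variable {α β : Type*} [MeasurableSpace α] [MeasurableSpace β] {T : α → β} {μ : Measure α}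
  {ν : Measure β}

lemma ae_comp (hT : AEMeasurePreserving T μ ν) {p : β → Prop} (hp : ∀ᵐ y ∂ν, p y) :
    ∀ᵐ x ∂μ, p (T x) :=
  ae_of_ae_map hT.aemeasurable (hT.map_eq.symm ▸ hp)

lemma integrable_comp {G : Type*} [NormedAddCommGroup G] (hT : AEMeasurePreserving T μ ν)
    {g : β → G} (hg : Integrable g ν) : Integrable (fun x ↦ g (T x)) μ :=
  (hT.map_eq.symm ▸ hg).comp_aemeasurable hT.aemeasurable

lemma integral_comp {G : Type*} [NormedAddCommGroup G] [NormedSpace ℝ G]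
    (hT : AEMeasurePreserving T μ ν) {g : β → G} (hg : AEStronglyMeasurable g ν) :
    ∫ x, g (T x) ∂μ = ∫ y, g y ∂ν := by
  obtain ⟨hTm, rfl⟩ := hT
  exact (integral_map hTm hg).symm

lemma iterate {T : α → α} (hT : AEMeasurePreserving T μ μ) (n : ℕ) :
    AEMeasurePreserving T^[n] μ μ := by
  induction n with
  | zero => exact ⟨aemeasurable_id, Measure.map_id⟩
  | succ n ih =>
    have hTn : AEMeasurable T^[n] (μ.map T) := hT.map_eq.symm ▸ ih.aemeasurable
    refine ⟨hTn.comp_aemeasurable hT.aemeasurable, ?_⟩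
    rw [Function.iterate_succ, ← hTn.map_map_of_aemeasurable hT.aemeasurable, hT.map_eq, ih.map_eq]

end AEMeasurePreserving

lemma m_eq_smul_map_circleMap : m = (ENNReal.ofReal (2 * Real.pi))⁻¹ •
    Measure.map (circleMap 0 1) (volume.restrict (Ioc 0 (2 * Real.pi))) := by
  unfold m
  congr 2
  ext θ
  simp [circleMap]

instance isProbabilityMeasure_m : IsProbabilityMeasure m := by
  constructor
  rw [m_eq_smul_map_circleMap, Measure.smul_apply, Measure.map_apply (by fun_prop) .univ]
  simp only [preimage_univ, Measure.restrict_apply_univ, Real.volume_Ioc, sub_zero, smul_eq_mul]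
  exact ENNReal.inv_mul_cancel (by simp [Real.pi_pos]) ENNReal.ofReal_ne_top

lemma ae_m_norm_eq_one : ∀ᵐ z ∂m, ‖z‖ = 1 := by
  rw [m_eq_smul_map_circleMap]
  refine Measure.ae_smul_measure ?_ _
  rw [ae_map_iff (by fun_prop) (measurableSet_eq_fun (by fun_prop) (by fun_prop))]
  exact .of_forall fun θ ↦ by simp

lemma integral_m_eq_circleAverage {G : Type*} [NormedAddCommGroup G] [NormedSpace ℝ G] {h : ℂ → G}
    (hh : AEStronglyMeasurable h m) : ∫ z, h z ∂m = Real.circleAverage h 0 1 := by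
  rw [m_eq_smul_map_circleMap] at hh ⊢
  have hh_map := hh.mono_ac
    (Measure.absolutelyContinuous_smul (ENNReal.inv_ne_zero.mpr ENNReal.ofReal_ne_top))
  rw [integral_smul_measure, integral_map (by fun_prop) hh_map, Real.circleAverage_def,
    intervalIntegral.integral_of_le Real.two_pi_pos.le]
  simp [Real.pi_pos.le]

lemma aestronglyMeasurable_m_of_continuousOn {G : Type*} [TopologicalSpace G]
    [TopologicalSpace.PseudoMetrizableSpace G] {h : ℂ → G}
    (hh : ContinuousOn h (sphere 0 1)) : AEStronglyMeasurable h m := by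
  have restrict_eq : m.restrict (sphere 0 1) = m :=
    Measure.restrict_eq_self_of_ae_mem (ae_m_norm_eq_one.mono fun z hz ↦ by simpa using hz)
  rw [← restrict_eq]
  exact hh.aestronglyMeasurable isClosed_sphere.measurableSet

lemma integrable_mul_id {g : ℂ → ℂ} (hg : Integrable g m) : Integrable (fun z ↦ g z * z) m :=
  hg.mul_bdd (by fun_prop) (ae_m_norm_eq_one.mono fun _ ↦ le_of_eq)

lemma integrable_mul_conj {g : ℂ → ℂ} (hg : Integrable g m) :
    Integrable (fun z ↦ g z * conj z) m :=
  hg.mul_bdd (by fun_prop) (ae_m_norm_eq_one.mono fun z hz ↦ by rw [RCLike.norm_conj, hz])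

lemma integrable_mul_re {g : ℂ → ℂ} (hg : Integrable g m) (c : ℂ) :
    Integrable (fun z ↦ g z * (c * z).re) m := by
  refine hg.mul_bdd (c := ‖c‖) (Continuous.aestronglyMeasurable (by fun_prop))
    (ae_m_norm_eq_one.mono fun z hz ↦ ?_)
  rw [norm_real]
  simpa [hz] using abs_re_le_norm (c * z)

lemma integral_mul_re {g : ℂ → ℂ} (hg : Integrable g m) (c : ℂ) :
    ∫ z, g z * (c * z).re ∂m =
      c / 2 * ∫ z, g z * z ∂m + conj c / 2 * ∫ z, g z * conj z ∂m := by
  rw [← integral_const_mul, ← integral_const_mul,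
    ← integral_add ((integrable_mul_id hg).const_mul _) ((integrable_mul_conj hg).const_mul _)]
  refine integral_congr_ae (.of_forall fun z ↦ ?_)
  simp only [re_eq_add_conj, map_mul]
  ring

lemma integral_mul_eq_integral_re_add {g : ℂ → ℂ} (hg : Integrable g m) (c : ℂ) :
    c * ∫ z, g z * z ∂m =
      ∫ z, g z * (c * z).re ∂m + I * ∫ z, g z * (-I * c * z).re ∂m := by
  rw [integral_mul_re hg, integral_mul_re hg]
  simp only [map_mul, map_neg, conj_I]
  linear_combination (c / 2 * ∫ z, g z * z ∂m - conj c / 2 * ∫ z, g z * conj z ∂m) * I_mul_I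

lemma mapsTo_mul_closedBall_ball {r : ℝ} (hr : |r| < 1) :
    MapsTo (fun z : ℂ ↦ r * z) (closedBall 0 1) (ball 0 1) := fun z hz ↦ by
  rw [mem_closedBall_zero_iff] at hz
  rw [mem_ball_zero_iff, norm_mul, norm_real, Real.norm_eq_abs]
  exact (mul_le_of_le_one_right (abs_nonneg r) hz).trans_lt hr

lemma eventually_mem_Ioo_nhdsLT_one : ∀ᶠ r : ℝ in 𝓝[<] 1, r ∈ Ioo (0 : ℝ) 1 :=
  Ioo_mem_nhdsLT one_pos

lemma eventually_abs_lt_one : ∀ᶠ r : ℝ in 𝓝[<] 1, |r| < 1 :=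
  eventually_mem_Ioo_nhdsLT_one.mono fun _ hr ↦ (abs_of_pos hr.1).trans_lt hr.2

/-- `f` is a bounded holomorphic function on the unit disk whose radial limits are given
`m`-almost everywhere by `F`. -/
structure HasBoundaryValues (f F : ℂ → ℂ) : Prop where
  differentiableOn : DifferentiableOn ℂ f (ball 0 1)
  bounded : ∃ C, ∀ z ∈ ball 0 1, ‖f z‖ ≤ C
  tendsto : ∀ᵐ z ∂m, Tendsto (fun r : ℝ ↦ f (r * z)) (𝓝[<] 1) (𝓝 (F z))

namespace HasBoundaryValues

variable {f F g G : ℂ → ℂ}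

lemma id : HasBoundaryValues id id where
  differentiableOn := differentiableOn_id
  bounded := ⟨1, fun z hz ↦ (mem_ball_zero_iff.mp hz).le⟩
  tendsto := .of_forall fun z ↦ tendsto_nhdsWithin_of_tendsto_nhds <| by
    simpa using (continuous_ofReal.mul_const z).tendsto 1

lemma mul (hf : HasBoundaryValues f F) (hg : HasBoundaryValues g G) :
    HasBoundaryValues (fun z ↦ f z * g z) (fun z ↦ F z * G z) where
  differentiableOn := hf.differentiableOn.mul hg.differentiableOn
  bounded := by
    obtain ⟨C, hC⟩ := hf.bounded
    obtain ⟨D, hD⟩ := hg.bounded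
    exact ⟨C * D, fun z hz ↦ norm_mul_le_of_le (hC z hz) (hD z hz)⟩
  tendsto := by filter_upwards [hf.tendsto, hg.tendsto] with z hfz hgz using hfz.mul hgz

lemma pow (hf : HasBoundaryValues f F) (n : ℕ) :
    HasBoundaryValues (fun z ↦ f z ^ n) (fun z ↦ F z ^ n) where
  differentiableOn := hf.differentiableOn.pow n
  bounded := by
    obtain ⟨C, hC⟩ := hf.bounded
    refine ⟨C ^ n, fun z hz ↦ ?_⟩
    rw [norm_pow]
    gcongr
    exact hC z hz
  tendsto := hf.tendsto.mono fun z hz ↦ hz.pow n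

lemma dslope_zero (hf : HasBoundaryValues f F) :
    HasBoundaryValues (dslope f 0) (fun z ↦ (F z - f 0) * conj z) where
  differentiableOn :=
    (differentiableOn_dslope (ball_mem_nhds _ one_pos)).mpr hf.differentiableOn
  bounded := by
    obtain ⟨C, hC⟩ := hf.bounded
    have mapsTo : MapsTo f (ball 0 1) (closedBall (f 0) (C + ‖f 0‖)) := fun z hz ↦ by
      rw [mem_closedBall_iff_norm]
      exact norm_sub_le_of_le (hC z hz) le_rfl
    exact ⟨_, fun z hz ↦ norm_dslope_le_div_of_mapsTo_ball hf.differentiableOn mapsTo hz⟩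
  tendsto := by
    filter_upwards [hf.tendsto, id.tendsto, ae_m_norm_eq_one] with z hfz hidz hz
    have z_ne_zero : z ≠ 0 := norm_ne_zero_iff.mp (hz ▸ one_ne_zero)
    rw [← inv_eq_conj hz, ← div_eq_mul_inv]
    refine ((hfz.sub_const (f 0)).div hidz z_ne_zero).congr' ?_
    filter_upwards [eventually_mem_Ioo_nhdsLT_one] with r hr
    have rz_ne_zero : (r : ℂ) * z ≠ 0 := mul_ne_zero (ofReal_ne_zero.mpr hr.1.ne') z_ne_zero
    simp [dslope_of_ne _ rz_ne_zero, slope_def_field]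

lemma aestronglyMeasurable_dilation (hf : HasBoundaryValues f F) {r : ℝ} (hr : |r| < 1) :
    AEStronglyMeasurable (fun z ↦ f (r * z)) m :=
  aestronglyMeasurable_m_of_continuousOn <| hf.differentiableOn.continuousOn.comp (by fun_prop)
    ((mapsTo_mul_closedBall_ball hr).mono_left sphere_subset_closedBall)

lemma integral_dilation (hf : HasBoundaryValues f F) {r : ℝ} (hr : |r| < 1) :
    ∫ z, f (r * z) ∂m = f 0 := by
  have diffContOnCl : DiffContOnCl ℂ (fun z ↦ f (r * z)) (ball 0 |1|) := by
    refine (hf.differentiableOn.comp (by fun_prop) ?_).diffContOnCl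
    rw [abs_one, closure_ball _ one_ne_zero]
    exact mapsTo_mul_closedBall_ball hr
  rw [integral_m_eq_circleAverage (hf.aestronglyMeasurable_dilation hr),
    diffContOnCl.circleAverage, mul_zero]

lemma aestronglyMeasurable (hf : HasBoundaryValues f F) : AEStronglyMeasurable F m := by
  obtain ⟨u, -, hu, hlim⟩ := exists_seq_strictMono_tendsto' (zero_lt_one (α := ℝ))
  have tendsto_u : Tendsto u atTop (𝓝[<] 1) :=
    tendsto_nhdsWithin_iff.mpr ⟨hlim, .of_forall fun n ↦ (hu n).2⟩
  refine aestronglyMeasurable_of_tendsto_ae atTop (fun n ↦ hf.aestronglyMeasurable_dilation ?_)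
    (hf.tendsto.mono fun z hz ↦ hz.comp tendsto_u)
  exact (abs_of_pos (hu n).1).trans_lt (hu n).2

lemma integrable (hf : HasBoundaryValues f F) : Integrable F m := by
  obtain ⟨C, hC⟩ := hf.bounded
  refine .of_bound hf.aestronglyMeasurable C ?_
  filter_upwards [hf.tendsto, ae_m_norm_eq_one] with z hFz hz
  refine le_of_tendsto hFz.norm (eventually_abs_lt_one.mono fun r hr ↦ hC _ ?_)
  exact mapsTo_mul_closedBall_ball hr (by simp [hz])

lemma integral_eq (hf : HasBoundaryValues f F) : ∫ z, F z ∂m = f 0 := by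
  obtain ⟨C, hC⟩ := hf.bounded
  have tendsto_integral :
      Tendsto (fun r : ℝ ↦ ∫ z, f (r * z) ∂m) (𝓝[<] 1) (𝓝 (∫ z, F z ∂m)) := by
    refine tendsto_integral_filter_of_dominated_convergence (fun _ ↦ C) ?_ ?_
      (integrable_const _) hf.tendsto
    · filter_upwards [eventually_abs_lt_one] with r hr using hf.aestronglyMeasurable_dilation hr
    · filter_upwards [eventually_abs_lt_one] with r hr
      filter_upwards [ae_m_norm_eq_one] with z hz
      exact hC _ (mapsTo_mul_closedBall_ball hr (by simp [hz]))
  refine tendsto_nhds_unique tendsto_integral (tendsto_const_nhds.congr' ?_)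
  filter_upwards [eventually_abs_lt_one] with r hr using (hf.integral_dilation hr).symm

lemma integral_mul_id (hf : HasBoundaryValues f F) : ∫ z, F z * z ∂m = 0 := by
  simpa using (hf.mul id).integral_eq

lemma integral_mul_conj (hf : HasBoundaryValues f F) : ∫ z, F z * conj z ∂m = deriv f 0 := by
  have integral_conj_eq_zero : ∫ z, conj z ∂m = 0 := by
    rw [integral_conj]
    simpa using id.integral_eq
  have integral_sub : ∫ z, (F z - f 0) * conj z ∂m = deriv f 0 := by
    simpa using hf.dslope_zero.integral_eq
  simp_rw [sub_mul] at integral_sub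
  rwa [MeasureTheory.integral_sub (integrable_mul_conj hf.integrable)
    (integrable_mul_conj (integrable_const _)), integral_const_mul, integral_conj_eq_zero,
    mul_zero, sub_zero] at integral_sub

end HasBoundaryValues

/-- The measure with density `1 + Re (c z)` with respect to `m`, to first order in `c` the harmonic
measure of the unit disk seen from the point `conj c / 2`. For `‖c‖ > 1` the density is truncated
at `0`. -/
noncomputable def tiltedCircleMeasure (c : ℂ) : Measure ℂ :=
  m.withDensity fun z ↦ ENNReal.ofReal (1 + (c * z).re)

lemma tiltedCircleMeasure_zero : tiltedCircleMeasure 0 = m := by simp [tiltedCircleMeasure]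

lemma tiltedCircleMeasure_absolutelyContinuous (c : ℂ) : tiltedCircleMeasure c ≪ m :=
  withDensity_absolutelyContinuous _ _

instance isFiniteMeasure_tiltedCircleMeasure (c : ℂ) : IsFiniteMeasure (tiltedCircleMeasure c) := by
  refine isFiniteMeasure_withDensity_ofReal (Integrable.hasFiniteIntegral (μ := m) ?_)
  refine .of_bound (Measurable.aestronglyMeasurable (by fun_prop)) (1 + ‖c‖)
    (ae_m_norm_eq_one.mono fun z hz ↦ (norm_add_le _ _).trans ?_)
  simpa [hz] using abs_re_le_norm (c * z)

lemma integral_tiltedCircleMeasure {c : ℂ} (hc : ‖c‖ ≤ 1) {g : ℂ → ℂ} (hg : Integrable g m) :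
    ∫ z, g z ∂tiltedCircleMeasure c = ∫ z, g z ∂m + ∫ z, g z * (c * z).re ∂m := by
  rw [tiltedCircleMeasure,
    integral_withDensity_eq_integral_toReal_smul (by fun_prop) (by simp),
    ← integral_add hg (integrable_mul_re hg c)]
  refine integral_congr_ae (ae_m_norm_eq_one.mono fun z hz ↦ ?_)
  have abs_re_le : |(c * z).re| ≤ 1 := (abs_re_le_norm _).trans (by simpa [hz] using hc)
  simp only
  rw [ENNReal.toReal_ofReal (by linarith [neg_abs_le (c * z).re]), real_smul]
  push_cast
  ring

lemma HasBoundaryValues.integral_tiltedCircleMeasure {f F : ℂ → ℂ} (hf : HasBoundaryValues f F)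
    {c : ℂ} (hc : ‖c‖ ≤ 1) :
    ∫ z, F z ∂tiltedCircleMeasure c = f 0 + conj c / 2 * deriv f 0 := by
  rw [_root_.integral_tiltedCircleMeasure hc hf.integrable, integral_mul_re hf.integrable,
    hf.integral_eq, hf.integral_mul_id, hf.integral_mul_conj, mul_zero, zero_add]

lemma HasBoundaryValues.integral_pow_tiltedCircleMeasure {f F : ℂ → ℂ} (hf : HasBoundaryValues f F)
    (h0 : f 0 = 0) {c : ℂ} (hc : ‖c‖ ≤ 1) (n : ℕ) :
    ∫ z, F z ^ n ∂tiltedCircleMeasure c =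
      0 ^ n + conj c / 2 * (n * 0 ^ (n - 1) * deriv f 0) := by
  have differentiableAt : DifferentiableAt ℂ f 0 :=
    hf.differentiableOn.differentiableAt (ball_mem_nhds _ one_pos)
  rw [(hf.pow n).integral_tiltedCircleMeasure hc, deriv_fun_pow differentiableAt, h0]

lemma spow_iterate (F : ℂ → ℂ) (ε : ℤ) {k n : ℕ} (hkn : k ≤ n) (z : ℂ) :
    spow F ε (n - k) (F^[k] z) = spow F ε n z := by
  simp only [spow, ← Function.iterate_add_apply, Nat.sub_add_cancel hkn]

/-- `f` is an inner function on the unit disk with radial boundary values `F`. -/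
structure IsInner (f F : ℂ → ℂ) : Prop extends HasBoundaryValues f F where
  norm_eq_one : ∀ᵐ z ∂m, ‖F z‖ = 1

namespace IsInner

variable {f F : ℂ → ℂ}

lemma norm_deriv_zero_le_one (hf : IsInner f F) : ‖deriv f 0‖ ≤ 1 := by
  rw [← hf.integral_mul_conj]
  have norm_le_one : ∀ᵐ z ∂m, ‖F z * conj z‖ ≤ 1 := by
    filter_upwards [hf.norm_eq_one, ae_m_norm_eq_one] with z hFz hz
    simp [hFz, hz]
  simpa using norm_integral_le_of_norm_le_const norm_le_one

lemma norm_mul_conj_deriv_zero_le_one (hf : IsInner f F) {c : ℂ} (hc : ‖c‖ ≤ 1) :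
    ‖c * conj (deriv f 0)‖ ≤ 1 := by
  rw [norm_mul, RCLike.norm_conj]
  exact mul_le_one₀ hc (norm_nonneg _) hf.norm_deriv_zero_le_one

lemma aeMeasurePreserving_tiltedCircleMeasure (hf : IsInner f F) (h0 : f 0 = 0) {c : ℂ}
    (hc : ‖c‖ ≤ 1) : AEMeasurePreserving F (tiltedCircleMeasure c)
      (tiltedCircleMeasure (c * conj (deriv f 0))) := by
  have hF : AEMeasurable F (tiltedCircleMeasure c) :=
    hf.aestronglyMeasurable.aemeasurable.mono_ac (tiltedCircleMeasure_absolutelyContinuous c)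
  refine ⟨hF, measure_ext_of_integral_pow_of_norm_eq_one ?_
    ((tiltedCircleMeasure_absolutelyContinuous _).ae_le ae_m_norm_eq_one) fun n ↦ ?_⟩
  · rw [ae_map_iff hF (measurableSet_eq_fun (by fun_prop) (by fun_prop))]
    exact (tiltedCircleMeasure_absolutelyContinuous c).ae_le hf.norm_eq_one
  · have moment_id := HasBoundaryValues.id.integral_pow_tiltedCircleMeasure rfl
      (hf.norm_mul_conj_deriv_zero_le_one hc) n
    simp only [id, deriv_id, map_mul, conj_conj] at moment_id
    rw [integral_map hF (by fun_prop), moment_id,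
      hf.integral_pow_tiltedCircleMeasure h0 hc]
    ring

lemma aeMeasurePreserving (hf : IsInner f F) (h0 : f 0 = 0) : AEMeasurePreserving F m m := by
  simpa [tiltedCircleMeasure_zero] using
    hf.aeMeasurePreserving_tiltedCircleMeasure h0 (c := 0) (by simp)

lemma integral_comp_mul_re (hf : IsInner f F) (h0 : f 0 = 0) {c : ℂ} (hc : ‖c‖ ≤ 1) {g : ℂ → ℂ}
    (hg : Integrable g m) :
    ∫ z, g (F z) * (c * z).re ∂m = ∫ z, g z * (c * conj (deriv f 0) * z).re ∂m := by
  have hF := hf.aeMeasurePreserving h0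
  have integral_tilted := (hf.aeMeasurePreserving_tiltedCircleMeasure h0 hc).integral_comp
    (hg.aestronglyMeasurable.mono_ac (tiltedCircleMeasure_absolutelyContinuous _))
  rwa [integral_tiltedCircleMeasure hc (hF.integrable_comp hg),
    integral_tiltedCircleMeasure (hf.norm_mul_conj_deriv_zero_le_one hc) hg,
    hF.integral_comp hg.aestronglyMeasurable, add_right_inj] at integral_tilted

lemma integral_comp_mul_id (hf : IsInner f F) (h0 : f 0 = 0) {g : ℂ → ℂ} (hg : Integrable g m) :
    ∫ z, g (F z) * z ∂m = conj (deriv f 0) * ∫ z, g z * z ∂m := by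
  have re_add_im := integral_mul_eq_integral_re_add
    ((hf.aeMeasurePreserving h0).integrable_comp hg) 1
  rw [integral_mul_eq_integral_re_add hg, ← one_mul (∫ z, g (F z) * z ∂m), re_add_im,
    hf.integral_comp_mul_re h0 (by simp) hg, hf.integral_comp_mul_re h0 (by simp) hg]
  simp only [one_mul, mul_one]

lemma integral_comp_iterate_mul_id (hf : IsInner f F) (h0 : f 0 = 0) {g : ℂ → ℂ}
    (hg : Integrable g m) (n : ℕ) :
    ∫ z, g (F^[n] z) * z ∂m = conj (deriv f 0) ^ n * ∫ z, g z * z ∂m := by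
  induction n with
  | zero => simp
  | succ n ih =>
    have integrable_comp := ((hf.aeMeasurePreserving h0).iterate n).integrable_comp hg
    calc ∫ z, g (F^[n + 1] z) * z ∂m
        = conj (deriv f 0) * ∫ z, g (F^[n] z) * z ∂m :=
          hf.integral_comp_mul_id h0 integrable_comp
      _ = conj (deriv f 0) ^ (n + 1) * ∫ z, g z * z ∂m := by rw [ih, pow_succ', mul_assoc]

lemma integral_iterate_mul_conj_iterate_mul (hf : IsInner f F) (h0 : f 0 = 0) {i j : ℕ}
    (hij : i ≤ j) {g : ℂ → ℂ} (hg : Integrable g m) :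
    ∫ z, F^[i] z * conj (F^[j] z) * g (F^[j] z) ∂m =
      conj (deriv f 0) ^ (j - i) * ∫ z, g z ∂m := by
  obtain ⟨k, rfl⟩ := Nat.exists_eq_add_of_le' hij
  have hF := hf.aeMeasurePreserving h0
  have hg_conj := integrable_mul_conj hg
  calc ∫ z, F^[i] z * conj (F^[k + i] z) * g (F^[k + i] z) ∂m
      = ∫ z, g (F^[k] (F^[i] z)) * conj (F^[k] (F^[i] z)) * F^[i] z ∂m := by
        simp only [Function.iterate_add_apply, mul_comm, mul_left_comm]
    _ = ∫ z, g (F^[k] z) * conj (F^[k] z) * z ∂m :=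
        (hF.iterate i).integral_comp
          (integrable_mul_id ((hF.iterate k).integrable_comp hg_conj)).aestronglyMeasurable
    _ = conj (deriv f 0) ^ k * ∫ z, g z * conj z * z ∂m :=
        hf.integral_comp_iterate_mul_id h0 hg_conj k
    _ = conj (deriv f 0) ^ (k + i - i) * ∫ z, g z ∂m := by
        rw [Nat.add_sub_cancel]
        congr 1
        refine integral_congr_ae (ae_m_norm_eq_one.mono fun z hz ↦ ?_)
        simp [mul_assoc, conj_mul', hz]

lemma ae_norm_spow_eq_one (hf : IsInner f F) (h0 : f 0 = 0) (ε : ℤ) (n : ℕ) :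
    ∀ᵐ z ∂m, ‖spow F ε n z‖ = 1 := by
  filter_upwards [((hf.aeMeasurePreserving h0).iterate n).ae_comp ae_m_norm_eq_one] with z hz
  unfold spow
  split_ifs <;> simp [hz]

lemma integrable_spow (hf : IsInner f F) (h0 : f 0 = 0) (ε : ℤ) (n : ℕ) :
    Integrable (spow F ε n) m := by
  refine .of_bound ?_ 1 ((hf.ae_norm_spow_eq_one h0 ε n).mono fun _ ↦ le_of_eq)
  have hFn := ((hf.aeMeasurePreserving h0).iterate n).aemeasurable.aestronglyMeasurable
  unfold spow
  split_ifs
  · exact hFn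
  · exact continuous_conj.comp_aestronglyMeasurable hFn

lemma norm_integral_spow_mul_spow_mul (hf : IsInner f F) (h0 : f 0 = 0) {ε δ : ℤ}
    (hεδ : ε * δ = -1) {i j : ℕ} (hij : i ≤ j) {g : ℂ → ℂ} (hg : Integrable g m) :
    ‖∫ z, spow F ε i z * spow F δ j z * g (F^[j] z) ∂m‖ =
      ‖deriv f 0‖ ^ (j - i) * ‖∫ z, g z ∂m‖ := by
  have norm_pair {h : ℂ → ℂ} (hh : Integrable h m) :
      ‖∫ z, F^[i] z * conj (F^[j] z) * h (F^[j] z) ∂m‖ =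
        ‖deriv f 0‖ ^ (j - i) * ‖∫ z, h z ∂m‖ := by
    rw [hf.integral_iterate_mul_conj_iterate_mul h0 hij hh, norm_mul, norm_pow, RCLike.norm_conj]
  rcases Int.mul_eq_neg_one_iff_eq_one_or_neg_one.mp hεδ with ⟨rfl, rfl⟩ | ⟨rfl, rfl⟩
  · simpa [spow] using norm_pair hg
  · have integrable_conj : Integrable (fun z ↦ conj (g z)) m :=
      conjCLE.toContinuousLinearMap.integrable_comp hg
    rw [← RCLike.norm_conj, ← integral_conj, ← RCLike.norm_conj (∫ z, g z ∂m), ← integral_conj,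
      ← norm_pair integrable_conj]
    simp [spow]

end IsInner

theorem stmt8 (f F : ℂ → ℂ)
    (hf : DifferentiableOn ℂ f (Metric.ball 0 1))
    (hmap : Set.MapsTo f (Metric.ball 0 1) (Metric.ball 0 1))
    (h0 : f 0 = 0)
    (hbd : ∀ᵐ z ∂m, Filter.Tendsto (fun r : ℝ => f ((r : ℂ) * z))
      (nhdsWithin 1 (Set.Iio 1)) (nhds (F z)))
    (hinner : ∀ᵐ z ∂m, ‖F z‖ = 1)
    (hrot : ¬ ∃ c : ℂ, Set.EqOn f (fun w => c * w) (Metric.ball 0 1))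
    (ε₁ ε₂ ε₃ ε₄ : ℤ)
    (hε1 : ε₁ = 1 ∨ ε₁ = -1) (hε2 : ε₂ = 1 ∨ ε₂ = -1)
    (hε3 : ε₃ = 1 ∨ ε₃ = -1) (hε4 : ε₄ = 1 ∨ ε₄ = -1)
    (h12 : ε₁ * ε₂ = -1) (h34 : ε₃ * ε₄ = -1)
    (n₁ n₂ n₃ n₄ : ℕ) (h1 : 0 < n₁) (hlt12 : n₁ < n₂) (hlt23 : n₂ < n₃) (hlt34 : n₃ < n₄) :
    ‖∫ z, spow F ε₁ n₁ z * spow F ε₂ n₂ z * spow F ε₃ n₃ z * spow F ε₄ n₄ z ∂m‖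
      = ‖deriv f 0‖ ^ ((n₂ - n₁) + (n₄ - n₃)) := by
  have hF : IsInner f F :=
    ⟨⟨hf, ⟨1, fun z hz ↦ (mem_ball_zero_iff.mp (hmap hz)).le⟩, hbd⟩, hinner⟩
  have integrable_second_pair := (hF.integrable_spow h0 ε₃ (n₃ - n₂)).mul_bdd
    (hF.integrable_spow h0 ε₄ (n₄ - n₂)).aestronglyMeasurable
    ((hF.ae_norm_spow_eq_one h0 ε₄ (n₄ - n₂)).mono fun _ ↦ le_of_eq)
  have first_pair := hF.norm_integral_spow_mul_spow_mul h0 h12 hlt12.le integrable_second_pair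
  have second_pair := hF.norm_integral_spow_mul_spow_mul h0 h34 (Nat.sub_le_sub_right hlt34.le n₂)
    (integrable_const (1 : ℂ))
  simp only [spow_iterate F _ hlt23.le, spow_iterate F _ (hlt23.trans hlt34).le,
    ← mul_assoc] at first_pair
  simp only [mul_one, integral_const, probReal_univ, one_smul, norm_one] at second_pair
  rw [first_pair, second_pair, ← pow_add, Nat.sub_sub_sub_cancel_right hlt23.le]
end
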